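/- Let C be a linear code of length n over F_{q^2}. There exists a truncation of C to a linear code of length r ≤ n over F_{q^2} which is linearly equivalent to a Hermitian self-orthogonal code if and only if the puncture code P(C) contains an element of Hamming weight r. -/

import Mathlib

/-!
Deleting coordinates and rescaling the others by nonzero scalars amounts to multiplying all words by
one vector `θ`, whose support is the set of coordinates kept. Since
`∑ θ_i u_i (θ_i v_i)^q = ∑ θ_i^{q+1} u_i v_i^q`, the resulting code is self-orthogonal exactly when
the vector of norms `θ_i^{q+1}` is orthogonal to all the products `u_i v_i^q`. As the norm maps
`𝔽_{q²}` onto `𝔽_q` and vanishes only at `0`, the vectors of norms are precisely the vectors over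
`𝔽_q`, and taking norms preserves the weight.
-/

/-- The Hamming weight of a vector: the number of its nonzero coordinates. -/
noncomputable def wt {n : ℕ} {F : Type} [Zero F] (v : Fin n → F) : ℕ :=
  Set.ncard {i | v i ≠ 0}

theorem range_powMonoidHom_eq_ker_of_card_eq_mul {G : Type*} [CommGroup G] [IsCyclic G] [Finite G]
    {m k : ℕ} (hG : Nat.card G = m * k) :
    (powMonoidHom k : G →* G).range = (powMonoidHom m).ker := by
  apply Subgroup.eq_of_le_of_card_ge
  · rintro _ ⟨y, rfl⟩
    rw [MonoidHom.mem_ker, powMonoidHom_apply, powMonoidHom_apply, ← pow_mul, mul_comm k, ← hG,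
      pow_card_eq_one']
  · have hk : 0 < k := Nat.pos_of_mul_pos_left (hG ▸ Nat.card_pos)
    rw [IsCyclic.card_powMonoidHom_ker, IsCyclic.card_powMonoidHom_range, hG,
      Nat.gcd_mul_right_left, Nat.gcd_mul_left_left, Nat.mul_div_cancel _ hk]

theorem pow_eq_self_iff_exists_mul_pow_eq {F : Type*} [Field F] [Fintype F] {q : ℕ}
    (hF : Fintype.card F = q ^ 2) (a : F) : a ^ q = a ↔ ∃ t, t * t ^ q = a := by
  have hq : q ≠ 0 := by
    rintro rfl
    exact Fintype.card_ne_zero hF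
  have card_units : Nat.card Fˣ = (q - 1) * (q + 1) := by
    rw [Nat.card_units, Nat.card_eq_fintype_card, hF, mul_comm, ← Nat.sq_sub_sq, one_pow]
  constructor
  · intro ha
    obtain rfl | ha₀ := eq_or_ne a 0
    · exact ⟨0, zero_mul _⟩
    have mem_ker : Units.mk0 a ha₀ ∈ (powMonoidHom (q - 1)).ker := by
      ext
      exact mul_right_cancel₀ ha₀ (by simp [pow_sub_one_mul hq, ha])
    rw [← range_powMonoidHom_eq_ker_of_card_eq_mul card_units] at mem_ker
    obtain ⟨t, ht⟩ := mem_ker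
    exact ⟨t, by simpa [pow_succ'] using congrArg Units.val ht⟩
  · rintro ⟨t, rfl⟩
    rw [mul_pow, ← pow_mul, ← sq, ← hF, FiniteField.pow_card, mul_comm]

/-- The puncture code of a set `C` of words, with respect to the conjugation `σ`. Over `𝔽_{q²}` one
takes `σ x = x ^ q`; the words fixed by `σ` are then those with coordinates in `𝔽_q`. -/
def punctureCode {ι F : Type*} [Fintype ι] [Semiring F] (σ : F → F) (C : Set (ι → F)) :
    Set (ι → F) :=
  {lam | (∀ i, σ (lam i) = lam i) ∧ ∀ u ∈ C, ∀ v ∈ C, ∑ i, lam i * u i * σ (v i) = 0}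

/-- Self-orthogonality of a set `D` of words for the form `∑ i, u i * σ (v i)`. Over `𝔽_{q²}` the
Hermitian form is the case `σ x = x ^ q`. -/
def IsHermitianSelfOrthogonal {ι F : Type*} [Fintype ι] [Semiring F] (σ : F → F)
    (D : Set (ι → F)) : Prop :=
  ∀ u ∈ D, ∀ v ∈ D, ∑ i, u i * σ (v i) = 0

section Conjugation

open scoped Pointwise

variable {ι F : Type*}

theorem support_mul_map [GroupWithZero F] (σ : F →* F) (θ : ι → F) :
    (Function.support fun i => θ i * σ (θ i)) = Function.support θ := by
  ext i
  have map_ne_zero : θ i ≠ 0 → σ (θ i) ≠ 0 := fun hθ => (hθ.isUnit.map σ).ne_zero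
  simpa using map_ne_zero

variable [Fintype ι]

theorem isHermitianSelfOrthogonal_smul_iff [Semiring F] (σ : F → F) (θ : ι → F) (C : Set (ι → F)) :
    IsHermitianSelfOrthogonal σ (θ • C) ↔
      ∀ u ∈ C, ∀ v ∈ C, ∑ i, θ i * u i * σ (θ i * v i) = 0 := by
  simp only [IsHermitianSelfOrthogonal, ← Set.image_smul, Set.forall_mem_image, smul_eq_mul,
    Pi.mul_apply]

theorem isHermitianSelfOrthogonal_indicator_smul_iff [Semiring F] (σ : F → F) (S : Finset ι)
    (θ : ι → F) (C : Set (ι → F)) :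
    IsHermitianSelfOrthogonal σ ((S : Set ι).indicator θ • C) ↔
      ∀ u ∈ C, ∀ v ∈ C, ∑ i ∈ S, θ i * u i * σ (θ i * v i) = 0 := by
  have sum_eq (u v : ι → F) :
      ∑ i, (S : Set ι).indicator θ i * u i * σ ((S : Set ι).indicator θ i * v i) =
        ∑ i ∈ S, θ i * u i * σ (θ i * v i) := by
    rw [← Finset.sum_subset S.subset_univ fun i _ hi => by simp [hi]]
    exact Finset.sum_congr rfl fun i hi => by simp [hi]
  simp only [isHermitianSelfOrthogonal_smul_iff, sum_eq]

theorem exists_truncation_iff_exists_isHermitianSelfOrthogonal_smul [Semiring F] (σ : F → F)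
    (C : Set (ι → F)) (r : ℕ) :
    (∃ (S : Finset ι) (θ : ι → F), S.card = r ∧ (∀ i ∈ S, θ i ≠ 0) ∧
        ∀ u ∈ C, ∀ v ∈ C, ∑ i ∈ S, θ i * u i * σ (θ i * v i) = 0) ↔
      ∃ θ : ι → F, IsHermitianSelfOrthogonal σ (θ • C) ∧ θ.support.ncard = r := by
  classical
  simp only [← isHermitianSelfOrthogonal_indicator_smul_iff]
  constructor
  · rintro ⟨S, θ, hS, hθ, horth⟩
    have hsupp : ((S : Set ι).indicator θ).support = S := by
      rw [Set.support_indicator, Set.inter_eq_left]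
      exact hθ
    exact ⟨_, horth, by rw [hsupp, Set.ncard_coe_finset, hS]⟩
  · rintro ⟨θ, horth, hcard⟩
    refine ⟨θ.support.toFinset, θ, ?_, by simp, ?_⟩
    · rw [← Set.ncard_eq_toFinset_card', hcard]
    · rwa [Set.coe_toFinset, Set.indicator_support]

theorem mem_punctureCode_iff_exists_isHermitianSelfOrthogonal_smul [CommSemiring F] (σ : F →* F)
    (hσ : ∀ a, σ a = a ↔ ∃ t, t * σ t = a) (C : Set (ι → F)) (lam : ι → F) :
    lam ∈ punctureCode σ C ↔
      ∃ θ : ι → F, (fun i => θ i * σ (θ i)) = lam ∧ IsHermitianSelfOrthogonal σ (θ • C) := by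
  have sum_eq (θ u v : ι → F) :
      ∑ i, θ i * u i * σ (θ i * v i) = ∑ i, θ i * σ (θ i) * u i * σ (v i) :=
    Finset.sum_congr rfl fun i _ => by rw [map_mul]; ring
  simp only [isHermitianSelfOrthogonal_smul_iff, sum_eq]
  constructor
  · rintro ⟨hfixed, horth⟩
    choose θ hθ using fun i => (hσ (lam i)).1 (hfixed i)
    obtain rfl : (fun i => θ i * σ (θ i)) = lam := funext hθ
    exact ⟨θ, rfl, horth⟩
  · rintro ⟨θ, rfl, horth⟩
    exact ⟨fun i => (hσ _).2 ⟨θ i, rfl⟩, horth⟩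

/-- Besides `x ↦ x ^ q` on `𝔽_{q²}`, the choice `σ = id` satisfies `hσ` over any field in which
every element is a square, which gives the Euclidean analogue over `𝔽_{2^m}`. -/
theorem truncation_hermitian_selforthogonal_iff_puncture_weight_general [Field F] (σ : F →* F)
    (hσ : ∀ a, σ a = a ↔ ∃ t, t * σ t = a) (C : Set (ι → F)) (r : ℕ) :
    (∃ (S : Finset ι) (θ : ι → F), S.card = r ∧ (∀ i ∈ S, θ i ≠ 0) ∧
        ∀ u ∈ C, ∀ v ∈ C, ∑ i ∈ S, θ i * u i * σ (θ i * v i) = 0) ↔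
      ∃ lam ∈ punctureCode σ C, lam.support.ncard = r := by
  rw [exists_truncation_iff_exists_isHermitianSelfOrthogonal_smul]
  simp only [mem_punctureCode_iff_exists_isHermitianSelfOrthogonal_smul σ hσ]
  constructor
  · rintro ⟨θ, horth, hcard⟩
    exact ⟨_, ⟨θ, rfl, horth⟩, by rwa [support_mul_map]⟩
  · rintro ⟨_, ⟨θ, rfl, horth⟩, hcard⟩
    exact ⟨θ, horth, by rwa [support_mul_map] at hcard⟩

end Conjugation

/-- Let `C` be a linear code of length `n` over `F = 𝔽_{q²}`.  There is a
truncation of `C` to a linear code of length `r ≤ n` (i.e. a choice of `r` of the coordinates)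
which is linearly equivalent to a Hermitian self-orthogonal code (i.e. after multiplying each
kept coordinate by a nonzero scalar `θ i`, the resulting code satisfies
`∑ u_i v_i^q = 0` for all codewords `u, v`) if and only if the puncture code
`P(C) = {λ ∈ 𝔽_q^n | ∑ λ_i u_i v_i^q = 0 for all u, v ∈ C}` contains an element of
Hamming weight `r`. -/
theorem truncation_hermitian_selforthogonal_iff_puncture_weight
    (q n r : ℕ) (hq : IsPrimePow q) (hr : r ≤ n)
    (F : Type) [Field F] [Fintype F] (hF : Fintype.card F = q ^ 2)
    (C : Submodule F (Fin n → F)) :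
    (∃ (S : Finset (Fin n)) (θ : Fin n → F),
        S.card = r ∧ (∀ i ∈ S, θ i ≠ 0) ∧
        ∀ u ∈ C, ∀ v ∈ C, ∑ i ∈ S, (θ i * u i) * (θ i * v i) ^ q = 0) ↔
      (∃ lam : Fin n → F,
        (∀ i, lam i ^ q = lam i) ∧
        (∀ u ∈ C, ∀ v ∈ C, ∑ i, lam i * u i * (v i) ^ q = 0) ∧
        wt lam = r) :=
  (truncation_hermitian_selforthogonal_iff_puncture_weight_general (powMonoidHom q)
    (pow_eq_self_iff_exists_mul_pow_eq hF) (C : Set (Fin n → F)) r).trans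
      (exists_congr fun _ => and_assoc)
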